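/- arXiv:1511.05384 — 2 statements merged into one kernel-verified Lean document; each statement's English description precedes it below -/
import Mathlib

section
/- Let G be a finite simple graph on n vertices and let k be an integer with 2 ≤ k ≤ n. If ψ_k(G) = n − k + 1, then G is connected. -/
/-- `S` is a `k`-path vertex cover of `G`: every path in `G` on `k` vertices
(i.e. whose support has `k` vertices) contains at least one vertex of `S`. -/
def SimpleGraph.IsPathVertexCover {V : Type*} (G : SimpleGraph V) (k : ℕ) (S : Set V) : Prop :=
  ∀ ⦃u w : V⦄ (p : G.Walk u w), p.IsPath → p.support.length = k → ∃ x ∈ p.support, x ∈ S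

/-- `ψ_k(G)`: the minimum cardinality of a `k`-path vertex cover of `G`. -/
noncomputable def SimpleGraph.pathNum {V : Type*} [Fintype V] (G : SimpleGraph V) (k : ℕ) : ℕ :=
  sInf {m : ℕ | ∃ S : Finset V, G.IsPathVertexCover k ↑S ∧ S.card = m}

/-! If a set `T` of `k` vertices does not induce a connected subgraph, then no path runs through
all of `T`, so the complement of `T` is a `k`-path vertex cover with only `n - k` elements. Hence
`ψ_k(G) = n - k + 1` forces every `k`-set to induce a connected subgraph, and since `2 ≤ k ≤ n` any
two vertices lie in a common `k`-set. -/

section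

variable {V : Type*} {G : SimpleGraph V} {T : Finset V}

theorem induce_connected_of_isPath {u v : V} {p : G.Walk u v} (hp : p.IsPath)
    (hsub : ∀ x ∈ p.support, x ∈ T) (hcard : T.card ≤ p.support.length) :
    (G.induce (T : Set V)).Connected := by
  classical
  have hsupport : p.support.toFinset = T :=
    Finset.eq_of_subset_of_card_le (fun x hx => hsub x (List.mem_toFinset.mp hx)) <| by
      rwa [List.toFinset_card_of_nodup hp.support_nodup]
  have hset : {x | x ∈ p.support} = (T : Set V) := by
    rw [← hsupport, List.coe_toFinset]
  exact hset ▸ p.connected_induce_support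

theorem isPathVertexCover_compl_of_not_connected {k : ℕ} (hcard : T.card ≤ k)
    (hT : ¬ (G.induce (T : Set V)).Connected) : G.IsPathVertexCover k (T : Set V)ᶜ := by
  intro u v p hp hlen
  by_contra! hmiss
  exact hT (induce_connected_of_isPath hp (fun x hx => not_not.mp (hmiss x hx)) (hlen ▸ hcard))

variable [Fintype V]

theorem pathNum_le_card {k : ℕ} {S : Finset V} (hS : G.IsPathVertexCover k S) :
    G.pathNum k ≤ S.card :=
  Nat.sInf_le ⟨S, hS, rfl⟩

theorem induce_connected_of_card_sub_lt_pathNum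
    (h : Fintype.card V - T.card < G.pathNum T.card) : (G.induce (T : Set V)).Connected := by
  classical
  contrapose! h
  have hcover : G.IsPathVertexCover T.card (Tᶜ : Finset V) := by
    rw [Finset.coe_compl]
    exact isPathVertexCover_compl_of_not_connected le_rfl h
  exact (pathNum_le_card hcover).trans_eq T.card_compl

end

theorem connected_of_psi_eq_max {V : Type*} [Fintype V] (G : SimpleGraph V)
    (k : ℕ) (hk2 : 2 ≤ k) (hkn : k ≤ Fintype.card V)
    (h : G.pathNum k = Fintype.card V - k + 1) : G.Connected := by
  classical
  have : Nonempty V := Fintype.card_pos_iff.mp (by omega)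
  refine ⟨fun u v => ?_⟩
  obtain ⟨T, huvT, rfl⟩ := Finset.exists_superset_card_eq
    (s := {u, v}) (Finset.card_le_two.trans hk2) hkn
  have hT : (G.induce (T : Set V)).Connected :=
    induce_connected_of_card_sub_lt_pathNum (by omega)
  have hu : u ∈ T := huvT (by simp)
  have hv : v ∈ T := huvT (by simp)
  exact (hT.preconnected ⟨u, hu⟩ ⟨v, hv⟩).map (SimpleGraph.Embedding.induce _).toHom
end

section
/- Let n ≥ 3 and let 2 ≤ k < n. Assume that for every connected simple graph H on m vertices with 2 ≤ m ≤ n, the implication ψ_{m−1}(H) = 2 ⟹ ψ_m(H) = 1 holds. Then for every simple graph G on n vertices: if ψ_k(G) = n − k + 1, then ψ_j(G) = n − j + 1 for every j with k < j ≤ n. -/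
/-- `G` is traceable on `s`: some path of `G` has vertex set exactly `s`, or equivalently, the
subgraph induced on `s` has a Hamiltonian path. -/
def IsTraceableOn {V : Type*} (G : SimpleGraph V) (s : Set V) : Prop :=
  ∃ (u w : V) (p : G.Walk u w), p.IsPath ∧ {x | x ∈ p.support} = s

/-- `G` is `k`-traceable in the sense of the literature on Hamiltonian paths: each of its induced
subgraphs on `k` vertices is traceable. This is the combinatorial form of the extremal value
`ψ_k(G) = |V| - k + 1`. -/
def IsKTraceable {V : Type*} (G : SimpleGraph V) (k : ℕ) : Prop :=
  ∀ T : Finset V, T.card = k → IsTraceableOn G (T : Set V)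

section Traceable

variable {V : Type*} {G : SimpleGraph V} {k : ℕ}

theorem isTraceableOn_coe_iff_exists_length_eq {T : Finset V} :
    IsTraceableOn G (T : Set V) ↔ ∃ (u w : V) (p : G.Walk u w),
      p.IsPath ∧ p.support.length = T.card ∧ ∀ x ∈ p.support, x ∈ T := by
  classical
  refine exists₃_congr fun u w p => and_congr_right fun hp => ?_
  rw [← List.coe_toFinset, Finset.coe_inj, ← List.toFinset_card_of_nodup hp.support_nodup]
  constructor
  · rintro rfl
    simp
  · rintro ⟨hcard, hsub⟩
    exact Finset.eq_of_subset_of_card_le (fun x hx => hsub x (List.mem_toFinset.1 hx)) hcard.ge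

theorem isTraceableOn_induce_iff {s : Set V} {t : Set s} :
    IsTraceableOn (G.induce s) t ↔ IsTraceableOn G (Subtype.val '' t) := by
  constructor
  · rintro ⟨u, w, p, hp, rfl⟩
    refine ⟨_, _, p.map (SimpleGraph.Embedding.induce s).toHom,
      hp.map (SimpleGraph.Embedding.induce (G := G) s).injective, ?_⟩
    ext x
    rw [Set.mem_ofPred_eq, SimpleGraph.Walk.support_map]
    simp
  · rintro ⟨u, w, p, hp, hpt⟩
    have hps : ∀ x ∈ p.support, x ∈ s := fun x hx =>
      Subtype.coe_image_subset s t (hpt.subset hx)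
    refine ⟨_, _, p.induce s hps, .of_map (f := (SimpleGraph.Embedding.induce s).toHom)
      (by simpa using hp), ?_⟩
    ext x
    simpa using Set.ext_iff.1 hpt x

theorem IsTraceableOn.reachable {s : Set V} (h : IsTraceableOn G s) {a b : V} (ha : a ∈ s)
    (hb : b ∈ s) : G.Reachable a b := by
  classical
  obtain ⟨u, w, p, -, rfl⟩ := h
  exact (p.takeUntil a ha).reachable.symm.trans (p.takeUntil b hb).reachable

theorem IsKTraceable.induce (h : IsKTraceable G k) (s : Set V) : IsKTraceable (G.induce s) k := by
  intro T hT
  simpa [isTraceableOn_induce_iff] using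
    h (T.map (Function.Embedding.subtype _)) (by rwa [Finset.card_map])

theorem IsKTraceable.connected [Fintype V] (h : IsKTraceable G k) (hk : 2 ≤ k)
    (hcard : k ≤ Fintype.card V) : G.Connected := by
  classical
  have hne : Nonempty V := Fintype.card_pos_iff.1 (by omega)
  refine (SimpleGraph.connected_iff _).2 ⟨fun a b => ?_, hne⟩
  obtain ⟨T, hab, -, hT⟩ := Finset.exists_subsuperset_card_eq
    (Finset.subset_univ {a, b}) (Finset.card_le_two.trans hk) hcard
  exact (h T hT).reachable (hab (by simp)) (hab (by simp))

end Traceable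

section PathNum

variable {V : Type*} {G : SimpleGraph V} {k : ℕ}

theorem isPathVertexCover_mono {S S' : Set V} (hSS' : S ⊆ S') (hS : G.IsPathVertexCover k S) :
    G.IsPathVertexCover k S' := fun _ _ p hp hlen =>
  (hS p hp hlen).imp fun _ ⟨hxp, hxS⟩ => ⟨hxp, hSS' hxS⟩

theorem isPathVertexCover_compl_iff {T : Finset V} :
    G.IsPathVertexCover T.card (T : Set V)ᶜ ↔ ¬ IsTraceableOn G (T : Set V) := by
  simp [isTraceableOn_coe_iff_exists_length_eq, SimpleGraph.IsPathVertexCover]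

variable [Fintype V]

theorem isPathVertexCover_of_card_lt_add_card {S : Finset V} (hS : Fintype.card V < k + S.card) :
    G.IsPathVertexCover k (S : Set V) := by
  classical
  intro u w p hp hlen
  by_contra! hdisj
  have hcard := Finset.card_le_univ (p.support.toFinset ∪ S)
  rw [Finset.card_union_of_disjoint (Finset.disjoint_left.2 (by simpa using hdisj)),
    List.toFinset_card_of_nodup hp.support_nodup, hlen] at hcard
  omega

theorem pathNum_le_card_of_isPathVertexCover {S : Finset V}
    (hS : G.IsPathVertexCover k (S : Set V)) : G.pathNum k ≤ S.card :=
  Nat.sInf_le ⟨S, hS, rfl⟩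

variable (G k) in
theorem exists_isPathVertexCover_card_eq_pathNum :
    ∃ S : Finset V, G.IsPathVertexCover k (S : Set V) ∧ S.card = G.pathNum k :=
  Nat.sInf_mem (s := {m | ∃ S : Finset V, G.IsPathVertexCover k (S : Set V) ∧ S.card = m})
    ⟨_, Finset.univ, fun u _ p _ _ => ⟨u, p.start_mem_support, by simp⟩, rfl⟩

variable (G) in
theorem pathNum_le_card_sub_add_one (hk1 : 1 ≤ k) (hk : k ≤ Fintype.card V) :
    G.pathNum k ≤ Fintype.card V - k + 1 := by
  obtain ⟨S, -, hS⟩ := Finset.exists_subset_card_eq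
    (s := (Finset.univ : Finset V)) (n := Fintype.card V - k + 1) (by rw [Finset.card_univ]; omega)
  exact hS ▸ pathNum_le_card_of_isPathVertexCover (isPathVertexCover_of_card_lt_add_card (by omega))

theorem card_lt_pathNum_add_iff (hk : k ≤ Fintype.card V) :
    Fintype.card V < G.pathNum k + k ↔ IsKTraceable G k := by
  classical
  constructor
  · rintro h T rfl
    by_contra hT
    have hle : G.pathNum T.card ≤ Tᶜ.card :=
      pathNum_le_card_of_isPathVertexCover (by simpa using isPathVertexCover_compl_iff.2 hT)
    rw [Finset.card_compl] at hle
    omega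
  · intro h
    obtain ⟨S, hS, hcard⟩ := exists_isPathVertexCover_card_eq_pathNum G k
    by_contra! hle
    obtain ⟨T, hTS, rfl⟩ := Finset.exists_subset_card_eq (s := Sᶜ) (n := k)
      (by rw [Finset.card_compl]; omega)
    have hST : (S : Set V) ⊆ (T : Set V)ᶜ := fun x hxS hxT => Finset.mem_compl.1 (hTS hxT) hxS
    exact isPathVertexCover_compl_iff.1 (isPathVertexCover_mono hST hS) (h T rfl)

theorem pathNum_eq_card_sub_add_one_iff (hk1 : 1 ≤ k) (hk : k ≤ Fintype.card V) :
    G.pathNum k = Fintype.card V - k + 1 ↔ IsKTraceable G k := by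
  have hle := pathNum_le_card_sub_add_one G hk1 hk
  rw [← card_lt_pathNum_add_iff hk]
  omega

end PathNum

theorem IsKTraceable.succ {V : Type*} {G : SimpleGraph V} {k : ℕ} (h : IsKTraceable G k)
    (hk : 2 ≤ k)
    (hyp : ∀ T : Finset V, T.card = k + 1 → (G.induce (T : Set V)).Connected →
      (G.induce (T : Set V)).pathNum k = 2 → (G.induce (T : Set V)).pathNum (k + 1) = 1) :
    IsKTraceable G (k + 1) := by
  intro T hT
  have hcard : Fintype.card (T : Set V) = k + 1 := by simpa using hT
  have hH : IsKTraceable (G.induce (T : Set V)) k := h.induce _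
  have hψ : (G.induce (T : Set V)).pathNum k = 2 := by
    rw [(pathNum_eq_card_sub_add_one_iff (by omega) (by omega)).2 hH]
    omega
  have hψ' : (G.induce (T : Set V)).pathNum (k + 1) = 1 :=
    hyp T hT (hH.connected hk (by omega)) hψ
  have hH' : IsKTraceable (G.induce (T : Set V)) (k + 1) :=
    (card_lt_pathNum_add_iff hcard.ge).1 (by omega)
  simpa using isTraceableOn_induce_iff.1 (hH' Finset.univ hcard)

theorem psi_cascade_of_conjecture_general {V : Type*} [Fintype V] (G : SimpleGraph V) {k : ℕ}
    (hk : 2 ≤ k)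
    (hyp : ∀ T : Finset V, k < T.card → (G.induce (T : Set V)).Connected →
      (G.induce (T : Set V)).pathNum (T.card - 1) = 2 →
      (G.induce (T : Set V)).pathNum T.card = 1)
    (h : G.pathNum k = Fintype.card V - k + 1) {j : ℕ} (hkj : k ≤ j) (hj : j ≤ Fintype.card V) :
    G.pathNum j = Fintype.card V - j + 1 := by
  refine (pathNum_eq_card_sub_add_one_iff (by omega) hj).2 ?_
  have hkn : k ≤ Fintype.card V := hkj.trans hj
  clear hj
  induction j, hkj using Nat.le_induction with
  | base => exact (pathNum_eq_card_sub_add_one_iff (by omega) hkn).1 h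
  | succ i hki ih =>
    refine ih.succ (hk.trans hki) fun T hT => ?_
    simpa only [hT, Nat.add_sub_cancel] using hyp T (by omega)

theorem psi_cascade_of_conjecture (n : ℕ) (hn : 3 ≤ n) (k : ℕ) (hk2 : 2 ≤ k) (hkn : k < n)
    (hyp : ∀ (W : Type) (instW : Fintype W) (H : SimpleGraph W),
      2 ≤ Fintype.card W → Fintype.card W ≤ n → H.Connected →
      @SimpleGraph.pathNum W instW H (Fintype.card W - 1) = 2 →
      @SimpleGraph.pathNum W instW H (Fintype.card W) = 1)
    (V : Type) (instV : Fintype V) (G : SimpleGraph V) (hcard : Fintype.card V = n)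
    (h : @SimpleGraph.pathNum V instV G k = n - k + 1) :
    ∀ j : ℕ, k < j → j ≤ n → @SimpleGraph.pathNum V instV G j = n - j + 1 := by
  subst hcard
  exact fun j hkj hj => psi_cascade_of_conjecture_general G hk2
    (fun T hT hconn => by
      simpa using hyp _ inferInstance _ (by simpa using hk2.trans hT.le)
        (by simpa using T.card_le_univ) hconn)
    h hkj.le hj
end
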